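/- Heisenberg-type uncertainty principle for the QP-WPT: let f ∈ L¹(ℝ) ∩ L²(ℝ) and ψ ∈ L¹(ℝ) ∩ L²(ℝ), fix α > 0, and assume that ∫_ℝ t² |f(t)|² dt < ∞ and ∫_ℝ ∫_ℝ ξ² |W^μ_f(ξ, β, α)|² dξ dβ < ∞. Then (∫_ℝ t² |f(t)|² dt) · (∫_ℝ ∫_ℝ ξ² |W^μ_f(ξ, β, α)|² dξ dβ) ≥ ((1/(2b)) · ‖f‖²_{L²(ℝ)} · ‖ψ‖_{L²(ℝ)})². -/

import Mathlib

open MeasureTheory Complex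

/-- The constant √(b/(2πi)) = √(b/(2π))·e^{−iπ/4}. -/
noncomputable def qpConst (b : ℝ) : ℂ :=
  (Real.sqrt (b / (2 * Real.pi)) : ℂ) * Complex.exp (-((Real.pi / 4 : ℝ) : ℂ) * Complex.I)

/-- The dilation ψ_α(t) = α^{−1/2} ψ(t/α). -/
noncomputable def dil (ψ : ℝ → ℂ) (α : ℝ) (t : ℝ) : ℂ :=
  ((α ^ (-(1 / 2 : ℝ)) : ℝ) : ℂ) * ψ (t / α)

/-- The quadratic-phase Fourier transform. -/
noncomputable def QPFT (a b c d e : ℝ) (f : ℝ → ℂ) (ξ : ℝ) : ℂ :=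
  qpConst b * ∫ t : ℝ, f t *
    Complex.exp (Complex.I * ((a * t ^ 2 + b * t * ξ + c * ξ ^ 2 + d * t + e * ξ : ℝ) : ℂ))

/-- The quadratic-phase wave packet transform of `f` with respect to the wavelet `ψ`. -/
noncomputable def QPWPT (a b c d e : ℝ) (ψ f : ℝ → ℂ) (ξ β α : ℝ) : ℂ :=
  qpConst b * ∫ t : ℝ,
    Complex.exp (Complex.I * ((2 * a * t ^ 2 + b * t * ξ + c * ξ ^ 2 + 2 * d * t + e * ξ
      - a * β ^ 2 - d * β : ℝ) : ℂ)) * f t * (starRingEnd ℂ) (dil ψ α (t - β))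

/-- The analyzing packet ψ^μ_{ξ,β,α}. -/
noncomputable def qpwPacket (a b c d e : ℝ) (ψ : ℝ → ℂ) (ξ β α : ℝ) (t : ℝ) : ℂ :=
  (starRingEnd ℂ) (qpConst b) *
    Complex.exp (-Complex.I * ((2 * a * t ^ 2 + b * t * ξ + c * ξ ^ 2 + 2 * d * t + e * ξ
      - a * β ^ 2 - d * β : ℝ) : ℂ)) * dil ψ α (t - β)

/-!
For a fixed position `β`, the wave packet transform is, up to a unimodular factor and the rescaling
`ξ ↦ -bξ/(2π)`, the Fourier transform of a chirped signal of squared modulus `|f(t)|²|ψ_α(t - β)|²`.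
Heisenberg's inequality applies to each of these signals. Integrating it over `β` with the
Cauchy–Schwarz inequality, Fubini turns the integrals of `|f|²` and `t²|f|²` against
`|ψ_α(t - β)|²` into products with `‖ψ‖²`.

Heisenberg's inequality is obtained from difference quotients, so that no derivative of the signal
is needed: Plancherel bounds `g(x + y) - g(x)` in `L²` by `2π⟪y, w⟫ 𝓕g(w)`, while a summation by
parts bounds `⟪u, y⟫ ‖g‖²` by the difference and the moments of `g` and `g(x + y)`. Take `y = hv`,
divide by `h` and let `h → 0`.
-/

open scoped FourierTransform SchwartzMap RealInnerProductSpace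

section CauchySchwarz

theorem sq_integral_le_of_sq_le_mul {X : Type*} [MeasurableSpace X] {μ : Measure X}
    {n p q : X → ℝ} (hp : Integrable p μ) (hq : Integrable q μ)
    (hp₀ : 0 ≤ᵐ[μ] p) (hq₀ : 0 ≤ᵐ[μ] q) (h : ∀ᵐ x ∂μ, n x ^ 2 ≤ p x * q x) :
    (∫ x, n x ∂μ) ^ 2 ≤ (∫ x, p x ∂μ) * ∫ x, q x ∂μ := by
  have memLp_sqrt {r : X → ℝ} (hr : Integrable r μ) (hr₀ : 0 ≤ᵐ[μ] r) :
      MemLp (fun x ↦ √(r x)) 2 μ := by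
    rw [memLp_two_iff_integrable_sq (by fun_prop)]
    exact hr.congr (hr₀.mono fun x hx ↦ (Real.sq_sqrt hx).symm)
  have integral_sqrt_rpow {r : X → ℝ} (hr₀ : 0 ≤ᵐ[μ] r) :
      ∫ x, √(r x) ^ (2 : ℝ) ∂μ = ∫ x, r x ∂μ :=
    integral_congr_ae (hr₀.mono fun x hx ↦ by simp [Real.sq_sqrt hx])
  have norm_le : ∀ᵐ x ∂μ, ‖n x‖ ≤ √(p x) * √(q x) := by
    filter_upwards [h, hp₀] with x hx hpx
    rw [← Real.sqrt_mul hpx]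
    exact Real.abs_le_sqrt hx
  have abs_le : |∫ x, n x ∂μ| ≤ √(∫ x, p x ∂μ) * √(∫ x, q x ∂μ) := calc
    |∫ x, n x ∂μ| ≤ ∫ x, √(p x) * √(q x) ∂μ :=
      norm_integral_le_of_norm_le ((memLp_sqrt hp hp₀).integrable_mul (memLp_sqrt hq hq₀)) norm_le
    _ ≤ √(∫ x, p x ∂μ) * √(∫ x, q x ∂μ) := by
      have holder := integral_mul_le_Lp_mul_Lq_of_nonneg (μ := μ) Real.HolderConjugate.two_two
        (f := fun x ↦ √(p x)) (g := fun x ↦ √(q x))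
        (.of_forall fun x ↦ Real.sqrt_nonneg _) (.of_forall fun x ↦ Real.sqrt_nonneg _)
        (by simpa using memLp_sqrt hp hp₀) (by simpa using memLp_sqrt hq hq₀)
      rwa [integral_sqrt_rpow hp₀, integral_sqrt_rpow hq₀, ← Real.sqrt_eq_rpow,
        ← Real.sqrt_eq_rpow] at holder
  calc (∫ x, n x ∂μ) ^ 2 ≤ (√(∫ x, p x ∂μ) * √(∫ x, q x ∂μ)) ^ 2 := by
        rw [← sq_abs]; gcongr
    _ = (∫ x, p x ∂μ) * ∫ x, q x ∂μ := by
        rw [mul_pow, Real.sq_sqrt (integral_nonneg_of_ae hp₀),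
          Real.sq_sqrt (integral_nonneg_of_ae hq₀)]

end CauchySchwarz

theorem norm_toLp_two_sq {X E : Type*} [MeasurableSpace X] {μ : Measure X}
    [NormedAddCommGroup E] {g : X → E} (hg : MemLp g 2 μ) :
    ‖hg.toLp g‖ ^ 2 = ∫ x, ‖g x‖ ^ 2 ∂μ := by
  have hnonneg : 0 ≤ ∫ x, ‖g x‖ ^ 2 ∂μ := integral_nonneg fun x ↦ by positivity
  rw [Lp.norm_toLp, hg.eLpNorm_eq_integral_rpow_norm two_ne_zero ENNReal.ofNat_ne_top,
    ENNReal.toReal_ofReal (by positivity)]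
  simpa using Real.rpow_inv_natCast_pow hnonneg two_ne_zero

section Plancherel

variable {V E : Type*} [NormedAddCommGroup V] [InnerProductSpace ℝ V] [FiniteDimensional ℝ V]
  [MeasurableSpace V] [BorelSpace V]
  [NormedAddCommGroup E] [InnerProductSpace ℂ E] [CompleteSpace E] {g : V → E}

theorem fourier_toLp_ae_eq (hg₁ : Integrable g) (hg₂ : MemLp g 2) :
    (𝓕 (hg₂.toLp g) : Lp E 2 (volume : Measure V)) =ᵐ[volume] 𝓕 g := by
  have hcont : Continuous (𝓕 g) :=
    VectorFourier.fourierIntegral_continuous Real.continuous_fourierChar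
      (by exact continuous_inner) hg₁
  refine ae_eq_of_integral_contDiff_smul_eq ((Lp.memLp _).locallyIntegrable one_le_two)
    hcont.locallyIntegrable fun φ hφ hφc ↦ ?_
  have hΦc : HasCompactSupport (Complex.ofRealCLM ∘ φ) := hφc.comp_left rfl
  set Φ : 𝓢(V, ℂ) := hΦc.toSchwartzMap (by fun_prop) with hΦ
  have smul_eq (u : V → E) : ∫ x, φ x • u x = ∫ x, Φ x • u x := by simp [hΦ]
  have flip : ∫ x, 𝓕 Φ x • g x = ∫ x, Φ x • 𝓕 g x := by
    have := VectorFourier.integral_fourierIntegral_smul_eq_flip (L := innerₗ V)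
      Real.continuous_fourierChar continuous_inner (Φ.integrable (μ := volume)) hg₁
    rwa [flip_innerₗ] at this
  have duality : ∫ x, 𝓕 Φ x • hg₂.toLp g x = ∫ x, Φ x • (𝓕 (hg₂.toLp g) : Lp E 2 _) x := by
    simpa using congrArg (· Φ) (Lp.fourier_toTemperedDistribution_eq (hg₂.toLp g))
  calc ∫ x, φ x • (𝓕 (hg₂.toLp g) : Lp E 2 _) x = ∫ x, 𝓕 Φ x • hg₂.toLp g x := by
        rw [smul_eq, duality]
    _ = ∫ x, 𝓕 Φ x • g x :=
        integral_congr_ae (hg₂.coeFn_toLp.mono fun x hx ↦ by simp only [hx])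
    _ = ∫ x, φ x • 𝓕 g x := by rw [flip, smul_eq]

theorem memLp_two_fourier (hg₁ : Integrable g) (hg₂ : MemLp g 2) : MemLp (𝓕 g) 2 :=
  (memLp_congr_ae (fourier_toLp_ae_eq hg₁ hg₂)).1 (Lp.memLp _)

theorem integral_norm_fourier_sq (hg₁ : Integrable g) (hg₂ : MemLp g 2) :
    ∫ w, ‖𝓕 g w‖ ^ 2 = ∫ x, ‖g x‖ ^ 2 := by
  have toLp_eq : (memLp_two_fourier hg₁ hg₂).toLp (𝓕 g) = 𝓕 (hg₂.toLp g) :=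
    Lp.ext ((MemLp.coeFn_toLp _).trans (fourier_toLp_ae_eq hg₁ hg₂).symm)
  rw [← norm_toLp_two_sq (memLp_two_fourier hg₁ hg₂), toLp_eq, Lp.norm_fourier_eq,
    norm_toLp_two_sq]

end Plancherel

section Translation

variable {V E : Type*} [NormedAddCommGroup V] [InnerProductSpace ℝ V] [FiniteDimensional ℝ V]
  [MeasurableSpace V] [BorelSpace V] [NormedAddCommGroup E] {g : V → E}

theorem fourier_comp_add_right [NormedSpace ℂ E] (g : V → E) (y w : V) :
    𝓕 (fun x ↦ g (x + y)) w = 𝐞 ⟪y, w⟫ • 𝓕 g w :=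
  congrFun (VectorFourier.fourierIntegral_comp_add_right 𝐞 volume (innerₗ V) g y) w

theorem norm_fourier_comp_add_right_sub_le [NormedSpace ℂ E] (hg : Integrable g) (y w : V) :
    ‖𝓕 (fun x ↦ g (x + y) - g x) w‖ ≤ 2 * Real.pi * |⟪y, w⟫| * ‖𝓕 g w‖ := by
  have fourier_sub : 𝓕 (fun x ↦ g (x + y) - g x) w = ((𝐞 ⟪y, w⟫ : ℂ) - 1) • 𝓕 g w := by
    rw [sub_smul, one_smul, ← Circle.smul_def, ← fourier_comp_add_right]
    simp only [Real.fourier_eq, smul_sub]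
    exact integral_sub ((Real.fourierIntegral_convergent_iff w).2 (hg.comp_add_right y))
      ((Real.fourierIntegral_convergent_iff w).2 hg)
  have norm_char_sub_one_le : ‖(𝐞 ⟪y, w⟫ : ℂ) - 1‖ ≤ 2 * Real.pi * |⟪y, w⟫| := by
    have := Real.norm_exp_I_mul_ofReal_sub_one_le (x := 2 * Real.pi * ⟪y, w⟫)
    rwa [mul_comm I, ← Real.fourierChar_apply, Real.norm_eq_abs, abs_mul,
      abs_of_pos Real.two_pi_pos] at this
  rw [fourier_sub, norm_smul]
  gcongr

theorem integral_norm_comp_add_right_sub_sq_le [InnerProductSpace ℂ E] [CompleteSpace E]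
    (hg₁ : Integrable g) (hg₂ : MemLp g 2) (y : V)
    (hB : Integrable fun w ↦ ⟪y, w⟫ ^ 2 * ‖𝓕 g w‖ ^ 2) :
    ∫ x, ‖g (x + y) - g x‖ ^ 2 ≤ 4 * Real.pi ^ 2 * ∫ w, ⟪y, w⟫ ^ 2 * ‖𝓕 g w‖ ^ 2 := by
  have hd₁ : Integrable fun x ↦ g (x + y) - g x := (hg₁.comp_add_right y).sub hg₁
  have hd₂ : MemLp (fun x ↦ g (x + y) - g x) 2 :=
    (hg₂.comp_measurePreserving (measurePreserving_add_right volume y)).sub hg₂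
  rw [← integral_norm_fourier_sq hd₁ hd₂, ← integral_const_mul]
  refine integral_mono ((memLp_two_fourier hd₁ hd₂).integrable_norm_pow two_ne_zero)
    (hB.const_mul _) fun w ↦ ?_
  calc ‖𝓕 (fun x ↦ g (x + y) - g x) w‖ ^ 2 ≤ (2 * Real.pi * |⟪y, w⟫| * ‖𝓕 g w‖) ^ 2 := by
        gcongr; exact norm_fourier_comp_add_right_sub_le hg₁ y w
    _ = 4 * Real.pi ^ 2 * (⟪y, w⟫ ^ 2 * ‖𝓕 g w‖ ^ 2) := by
        rw [mul_pow, mul_pow, mul_pow, sq_abs]; ring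

end Translation

section Moments

variable {V E : Type*} [NormedAddCommGroup V] [InnerProductSpace ℝ V]
  [MeasurableSpace V] [BorelSpace V] {μ : Measure V} {ρ : V → ℝ} {u : V}

theorem integrable_inner_mul (h₀ : Integrable ρ μ)
    (h₂ : Integrable (fun x ↦ ⟪u, x⟫ ^ 2 * ρ x) μ) : Integrable (fun x ↦ ⟪u, x⟫ * ρ x) μ := by
  refine (h₂.norm.add h₀.norm).mono'
    ((by fun_prop : AEStronglyMeasurable (fun x ↦ ⟪u, x⟫) μ).mul h₀.1) (.of_forall fun x ↦ ?_)
  have abs_le_sq_add_one : |⟪u, x⟫| ≤ ⟪u, x⟫ ^ 2 + 1 := by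
    rw [← sq_abs]; nlinarith [sq_nonneg (|⟪u, x⟫| - 1)]
  calc ‖⟪u, x⟫ * ρ x‖ = |⟪u, x⟫| * ‖ρ x‖ := norm_mul _ _
    _ ≤ (⟪u, x⟫ ^ 2 + 1) * ‖ρ x‖ := by gcongr
    _ = ‖⟪u, x⟫ ^ 2 * ρ x‖ + ‖ρ x‖ := by
      rw [norm_mul, Real.norm_of_nonneg (sq_nonneg ⟪u, x⟫)]; ring

variable [μ.IsAddRightInvariant]

theorem integrable_inner_mul_comp_add_right (h₀ : Integrable ρ μ)
    (h₁ : Integrable (fun x ↦ ⟪u, x⟫ * ρ x) μ) (y : V) :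
    Integrable (fun x ↦ ⟪u, x⟫ * ρ (x + y)) μ := by
  simpa [inner_add_right, add_mul] using
    (h₁.sub (h₀.const_mul ⟪u, y⟫)).comp_add_right y

theorem integral_inner_mul_comp_add_right (h₀ : Integrable ρ μ)
    (h₁ : Integrable (fun x ↦ ⟪u, x⟫ * ρ x) μ) (y : V) :
    ∫ x, ⟪u, x⟫ * ρ (x + y) ∂μ = ∫ x, ⟪u, x⟫ * ρ x ∂μ - ⟪u, y⟫ * ∫ x, ρ x ∂μ := by
  rw [← integral_const_mul, ← integral_sub h₁ (h₀.const_mul _),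
    ← integral_add_right_eq_self (fun x ↦ ⟪u, x⟫ * ρ x - ⟪u, y⟫ * ρ x) y]
  simp only [inner_add_right, add_mul, add_sub_cancel_right]

theorem integrable_inner_sq_mul_comp_add_right (h₀ : Integrable ρ μ)
    (h₂ : Integrable (fun x ↦ ⟪u, x⟫ ^ 2 * ρ x) μ) (y : V) :
    Integrable (fun x ↦ ⟪u, x⟫ ^ 2 * ρ (x + y)) μ := by
  have h₁ := integrable_inner_mul h₀ h₂
  refine (((h₂.sub (h₁.const_mul (2 * ⟪u, y⟫))).add
    (h₀.const_mul (⟪u, y⟫ ^ 2))).comp_add_right y).congr (.of_forall fun x ↦ ?_)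
  simp only [Pi.add_apply, Pi.sub_apply, inner_add_right]
  ring

theorem integral_inner_sq_mul_comp_add_right (h₀ : Integrable ρ μ)
    (h₂ : Integrable (fun x ↦ ⟪u, x⟫ ^ 2 * ρ x) μ) (y : V) :
    ∫ x, ⟪u, x⟫ ^ 2 * ρ (x + y) ∂μ = ∫ x, ⟪u, x⟫ ^ 2 * ρ x ∂μ
      - 2 * ⟪u, y⟫ * ∫ x, ⟪u, x⟫ * ρ x ∂μ + ⟪u, y⟫ ^ 2 * ∫ x, ρ x ∂μ := by
  have h₁ := (integrable_inner_mul h₀ h₂).const_mul (2 * ⟪u, y⟫)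
  rw [← integral_const_mul, ← integral_const_mul, ← integral_sub h₂ h₁,
    ← integral_add (by exact h₂.sub h₁) (h₀.const_mul _),
    ← integral_add_right_eq_self (fun x ↦ ⟪u, x⟫ ^ 2 * ρ x - 2 * ⟪u, y⟫ * (⟪u, x⟫ * ρ x)
      + ⟪u, y⟫ ^ 2 * ρ x) y]
  congr with x
  rw [inner_add_right]
  ring

theorem continuous_integral_inner_sq_mul_comp_add_right (h₀ : Integrable ρ μ)
    (h₂ : Integrable (fun x ↦ ⟪u, x⟫ ^ 2 * ρ x) μ) :
    Continuous fun y ↦ ∫ x, ⟪u, x⟫ ^ 2 * ρ (x + y) ∂μ := by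
  simp only [integral_inner_sq_mul_comp_add_right h₀ h₂]
  fun_prop

theorem sq_inner_mul_integral_norm_sq_le [NormedAddCommGroup E] {g : V → E} (hg : MemLp g 2 μ)
    (hA : Integrable (fun x ↦ ⟪u, x⟫ ^ 2 * ‖g x‖ ^ 2) μ) (y : V) :
    (⟪u, y⟫ * ∫ x, ‖g x‖ ^ 2 ∂μ) ^ 2 ≤
      2 * (∫ x, ⟪u, x⟫ ^ 2 * ‖g x‖ ^ 2 ∂μ + ∫ x, ⟪u, x⟫ ^ 2 * ‖g (x + y)‖ ^ 2 ∂μ) *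
        ∫ x, ‖g (x + y) - g x‖ ^ 2 ∂μ := by
  have hN : Integrable (fun x ↦ ‖g x‖ ^ 2) μ := hg.integrable_norm_pow two_ne_zero
  have hM := integrable_inner_mul hN hA
  have hAy := integrable_inner_sq_mul_comp_add_right hN hA y
  have hD : Integrable (fun x ↦ ‖g (x + y) - g x‖ ^ 2) μ :=
    ((hg.comp_measurePreserving (measurePreserving_add_right μ y)).sub hg).integrable_norm_pow
      two_ne_zero
  have summation_by_parts : ∫ x, (⟪u, x⟫ * ‖g x‖ ^ 2 - ⟪u, x⟫ * ‖g (x + y)‖ ^ 2) ∂μ =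
      ⟪u, y⟫ * ∫ x, ‖g x‖ ^ 2 ∂μ := by
    rw [integral_sub hM (integrable_inner_mul_comp_add_right hN hM y),
      integral_inner_mul_comp_add_right hN hM, sub_sub_cancel]
  rw [← summation_by_parts, ← integral_add hA hAy, ← integral_const_mul (2 : ℝ)]
  refine sq_integral_le_of_sq_le_mul ((hA.add hAy).const_mul 2) hD
    (.of_forall fun x ↦ by simp only [Pi.zero_apply]; positivity)
    (.of_forall fun x ↦ by simp only [Pi.zero_apply]; positivity) (.of_forall fun x ↦ ?_)
  have sq_sub_le : (‖g x‖ - ‖g (x + y)‖) ^ 2 ≤ ‖g (x + y) - g x‖ ^ 2 := by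
    rw [← sq_abs, norm_sub_rev]
    gcongr
    exact abs_norm_sub_norm_le _ _
  have sq_add_le : (‖g x‖ + ‖g (x + y)‖) ^ 2 ≤ 2 * (‖g x‖ ^ 2 + ‖g (x + y)‖ ^ 2) := add_sq_le
  calc (⟪u, x⟫ * ‖g x‖ ^ 2 - ⟪u, x⟫ * ‖g (x + y)‖ ^ 2) ^ 2
      = ⟪u, x⟫ ^ 2 * (‖g x‖ + ‖g (x + y)‖) ^ 2 * (‖g x‖ - ‖g (x + y)‖) ^ 2 := by ring
    _ ≤ ⟪u, x⟫ ^ 2 * (2 * (‖g x‖ ^ 2 + ‖g (x + y)‖ ^ 2)) * ‖g (x + y) - g x‖ ^ 2 := by gcongr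
    _ = 2 * (⟪u, x⟫ ^ 2 * ‖g x‖ ^ 2 + ⟪u, x⟫ ^ 2 * ‖g (x + y)‖ ^ 2) * ‖g (x + y) - g x‖ ^ 2 := by
      ring

end Moments

section Heisenberg

variable {V E : Type*} [NormedAddCommGroup V] [InnerProductSpace ℝ V] [FiniteDimensional ℝ V]
  [MeasurableSpace V] [BorelSpace V]
  [NormedAddCommGroup E] [InnerProductSpace ℂ E] [CompleteSpace E] {g : V → E} {u v : V}

theorem sq_inner_mul_integral_norm_sq_le_fourier (hg₁ : Integrable g) (hg₂ : MemLp g 2)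
    (hA : Integrable fun x ↦ ⟪u, x⟫ ^ 2 * ‖g x‖ ^ 2)
    (hB : Integrable fun w ↦ ⟪v, w⟫ ^ 2 * ‖𝓕 g w‖ ^ 2) {h : ℝ} (hh : h ≠ 0) :
    (⟪u, v⟫ * ∫ x, ‖g x‖ ^ 2) ^ 2 ≤
      2 * ((∫ x, ⟪u, x⟫ ^ 2 * ‖g x‖ ^ 2) + ∫ x, ⟪u, x⟫ ^ 2 * ‖g (x + h • v)‖ ^ 2) *
        (4 * Real.pi ^ 2 * ∫ w, ⟪v, w⟫ ^ 2 * ‖𝓕 g w‖ ^ 2) := by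
  have inner_smul_sq (w : V) : ⟪h • v, w⟫ ^ 2 * ‖𝓕 g w‖ ^ 2 =
      h ^ 2 * (⟪v, w⟫ ^ 2 * ‖𝓕 g w‖ ^ 2) := by
    rw [real_inner_smul_left, mul_pow, mul_assoc]
  have difference_le : ∫ x, ‖g (x + h • v) - g x‖ ^ 2 ≤
      4 * Real.pi ^ 2 * (h ^ 2 * ∫ w, ⟪v, w⟫ ^ 2 * ‖𝓕 g w‖ ^ 2) := by
    simpa only [inner_smul_sq, integral_const_mul] using
      integral_norm_comp_add_right_sub_sq_le hg₁ hg₂ (h • v)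
        (by simpa only [inner_smul_sq] using hB.const_mul (h ^ 2))
  have moment_nonneg (y : V) : 0 ≤ ∫ x, ⟪u, x⟫ ^ 2 * ‖g (x + y)‖ ^ 2 :=
    integral_nonneg fun x ↦ by positivity
  have moments_nonneg : 0 ≤ 2 * ((∫ x, ⟪u, x⟫ ^ 2 * ‖g x‖ ^ 2) +
      ∫ x, ⟪u, x⟫ ^ 2 * ‖g (x + h • v)‖ ^ 2) := by
    have := moment_nonneg 0
    simp only [add_zero] at this
    linarith [moment_nonneg (h • v)]
  have translated := (sq_inner_mul_integral_norm_sq_le hg₂ hA (h • v)).trans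
    (mul_le_mul_of_nonneg_left difference_le moments_nonneg)
  rw [real_inner_smul_right] at translated
  refine le_of_mul_le_mul_left ?_ (by positivity : 0 < h ^ 2)
  linarith

theorem heisenberg_uncertainty (hg₁ : Integrable g) (hg₂ : MemLp g 2)
    (hA : Integrable fun x ↦ ⟪u, x⟫ ^ 2 * ‖g x‖ ^ 2)
    (hB : Integrable fun w ↦ ⟪v, w⟫ ^ 2 * ‖𝓕 g w‖ ^ 2) :
    (⟪u, v⟫ * ∫ x, ‖g x‖ ^ 2) ^ 2 ≤ 16 * Real.pi ^ 2 *
      (∫ x, ⟪u, x⟫ ^ 2 * ‖g x‖ ^ 2) * ∫ w, ⟪v, w⟫ ^ 2 * ‖𝓕 g w‖ ^ 2 := by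
  let bound (h : ℝ) : ℝ :=
    2 * ((∫ x, ⟪u, x⟫ ^ 2 * ‖g x‖ ^ 2) + ∫ x, ⟪u, x⟫ ^ 2 * ‖g (x + h • v)‖ ^ 2) *
      (4 * Real.pi ^ 2 * ∫ w, ⟪v, w⟫ ^ 2 * ‖𝓕 g w‖ ^ 2)
  have le_bound : ∀ h ≠ 0, (⟪u, v⟫ * ∫ x, ‖g x‖ ^ 2) ^ 2 ≤ bound h := fun h hh ↦
    sq_inner_mul_integral_norm_sq_le_fourier hg₁ hg₂ hA hB hh
  have moment_continuous : Continuous fun h : ℝ ↦ ∫ x, ⟪u, x⟫ ^ 2 * ‖g (x + h • v)‖ ^ 2 :=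
    (continuous_integral_inner_sq_mul_comp_add_right (hg₂.integrable_norm_pow two_ne_zero)
      hA).comp (continuous_id.smul continuous_const)
  have bound_continuous : Continuous bound := by
    simp only [bound]
    fun_prop
  calc (⟪u, v⟫ * ∫ x, ‖g x‖ ^ 2) ^ 2 ≤ bound 0 :=
        ge_of_tendsto (bound_continuous.continuousWithinAt (s := {0}ᶜ))
          (Filter.eventually_of_mem self_mem_nhdsWithin le_bound)
    _ = 16 * Real.pi ^ 2 * (∫ x, ⟪u, x⟫ ^ 2 * ‖g x‖ ^ 2) *
          ∫ w, ⟪v, w⟫ ^ 2 * ‖𝓕 g w‖ ^ 2 := by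
        simp only [bound, zero_smul, add_zero]; ring

end Heisenberg

section Convolution

variable {G 𝕜 : Type*} [AddGroup G] [MeasurableSpace G] [MeasurableAdd₂ G] [MeasurableNeg G]
  {μ : Measure G} [SFinite μ] [μ.IsAddRightInvariant] [μ.IsNegInvariant]
  [RCLike 𝕜] {F P : G → 𝕜}

theorem integrable_mul_comp_sub (hF : Integrable F μ) (hP : Integrable P μ) :
    Integrable (fun q : G × G ↦ F q.2 * P (q.2 - q.1)) (μ.prod μ) := by
  simpa using hF.convolution_integrand (ContinuousLinearMap.mul ℝ 𝕜) hP.comp_neg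

theorem integral_integral_mul_comp_sub [μ.IsAddLeftInvariant] (hF : Integrable F μ)
    (hP : Integrable P μ) :
    ∫ s, ∫ t, F t * P (t - s) ∂μ ∂μ = (∫ t, F t ∂μ) * ∫ t, P t ∂μ := by
  rw [integral_integral_swap (integrable_mul_comp_sub hF hP)]
  simp only [integral_const_mul, integral_sub_left_eq_self P μ, integral_mul_const]

end Convolution

section Dilation

variable {ψ : ℝ → ℂ} {α : ℝ}

theorem memLp_dil {p : ENNReal} (hψ : MemLp ψ p) (hα : α ≠ 0) : MemLp (dil ψ α) p := by
  have map_eq : volume.map (fun t : ℝ ↦ t / α) = ENNReal.ofReal |α| • volume := by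
    simpa [div_eq_mul_inv] using Real.map_volume_mul_right (inv_ne_zero hα)
  have hψ_map : MemLp ψ p (volume.map fun t : ℝ ↦ t / α) := by
    rw [map_eq]; exact hψ.smul_measure ENNReal.ofReal_ne_top
  exact (hψ_map.comp_of_map (by fun_prop)).const_mul _

theorem norm_dil_sq (ψ : ℝ → ℂ) (hα : 0 ≤ α) (t : ℝ) :
    ‖dil ψ α t‖ ^ 2 = α⁻¹ * ‖ψ (t / α)‖ ^ 2 := by
  have rpow_sq : (α ^ (-(1 / 2 : ℝ))) ^ 2 = α⁻¹ := by
    rw [← Real.rpow_mul_natCast hα, ← Real.rpow_neg_one]; norm_num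
  rw [dil, norm_mul, mul_pow, Complex.norm_real, Real.norm_eq_abs, sq_abs, rpow_sq]

theorem integral_norm_dil_sq (ψ : ℝ → ℂ) (hα : 0 < α) :
    ∫ t, ‖dil ψ α t‖ ^ 2 = ∫ t, ‖ψ t‖ ^ 2 := by
  simp only [norm_dil_sq ψ hα.le, integral_const_mul]
  rw [Measure.integral_comp_div (fun t ↦ ‖ψ t‖ ^ 2) α, abs_of_pos hα, smul_eq_mul,
    inv_mul_cancel_left₀ hα.ne']

end Dilation

/-- The signal `f`, multiplied by the chirp `exp (i(2at² + 2dt))` and cut off by the conjugate of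
the window `φ` centred at `β`. Its Fourier transform is the wave packet transform of `f` up to
rescaling and a unimodular factor, the window being `dil ψ α`. -/
noncomputable def qpWindowed (a d : ℝ) (φ f : ℝ → ℂ) (β t : ℝ) : ℂ :=
  Complex.exp (Complex.I * ((2 * a * t ^ 2 + 2 * d * t : ℝ) : ℂ)) * f t *
    (starRingEnd ℂ) (φ (t - β))

section WindowedSignal

variable {a d : ℝ} {φ f : ℝ → ℂ} {β : ℝ}

theorem norm_qpWindowed_sq (a d : ℝ) (φ f : ℝ → ℂ) (β t : ℝ) :
    ‖qpWindowed a d φ f β t‖ ^ 2 = ‖f t‖ ^ 2 * ‖φ (t - β)‖ ^ 2 := by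
  rw [qpWindowed, norm_mul, norm_mul, Complex.norm_exp_I_mul_ofReal, RCLike.norm_conj, one_mul,
    mul_pow]

theorem integrable_qpWindowed (a d : ℝ) (hφ : MemLp φ 2) (hf : MemLp f 2) (β : ℝ) :
    Integrable (qpWindowed a d φ f β) := by
  have chirp_mul : MemLp (fun t ↦
      Complex.exp (Complex.I * ((2 * a * t ^ 2 + 2 * d * t : ℝ) : ℂ)) * f t) 2 :=
    hf.of_le ((by fun_prop : Continuous fun t : ℝ ↦
        Complex.exp (Complex.I * ((2 * a * t ^ 2 + 2 * d * t : ℝ) : ℂ))).aestronglyMeasurable.mul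
        hf.1) (.of_forall fun t ↦ by rw [norm_mul, Complex.norm_exp_I_mul_ofReal, one_mul])
  exact chirp_mul.integrable_mul
    (hφ.comp_measurePreserving (measurePreserving_sub_right volume β)).star

theorem memLp_two_qpWindowed (hφ : MemLp φ 2) (hf : MemLp f 2)
    (h : Integrable fun t ↦ ‖f t‖ ^ 2 * ‖φ (t - β)‖ ^ 2) :
    MemLp (qpWindowed a d φ f β) 2 := by
  rw [memLp_two_iff_integrable_sq_norm (integrable_qpWindowed a d hφ hf β).1]
  simpa only [norm_qpWindowed_sq] using h

end WindowedSignal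

section WavePacketTransform

variable {a b c d e : ℝ} {ψ f : ℝ → ℂ} {β α : ℝ}

theorem norm_qpConst_sq (hb : 0 ≤ b) : ‖qpConst b‖ ^ 2 = b / (2 * Real.pi) := by
  rw [qpConst, ← Complex.ofReal_neg, norm_mul, Complex.norm_exp_ofReal_mul_I, mul_one,
    Complex.norm_real, Real.norm_eq_abs, sq_abs, Real.sq_sqrt (by positivity)]

theorem QPWPT_eq_fourier (a b c d e : ℝ) (ψ f : ℝ → ℂ) (ξ β α : ℝ) :
    QPWPT a b c d e ψ f ξ β α = qpConst b *
      (Complex.exp (Complex.I * ((c * ξ ^ 2 + e * ξ - a * β ^ 2 - d * β : ℝ) : ℂ)) *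
        𝓕 (qpWindowed a d (dil ψ α) f β) (-(b / (2 * Real.pi)) * ξ)) := by
  rw [QPWPT, Real.fourier_real_eq_integral_exp_smul]
  congr 1
  rw [← integral_const_mul]
  congr 1 with t
  have phase_eq : -2 * Real.pi * t * (-(b / (2 * Real.pi)) * ξ) = b * t * ξ := by
    field_simp
  rw [phase_eq, qpWindowed, smul_eq_mul, ← mul_assoc, ← mul_assoc, ← mul_assoc,
    ← Complex.exp_add, ← Complex.exp_add]
  congr 3
  push_cast
  ring

theorem norm_QPWPT_sq (hb : 0 ≤ b) (a c d e : ℝ) (ψ f : ℝ → ℂ) (ξ β α : ℝ) :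
    ‖QPWPT a b c d e ψ f ξ β α‖ ^ 2 = b / (2 * Real.pi) *
      ‖𝓕 (qpWindowed a d (dil ψ α) f β) (-(b / (2 * Real.pi)) * ξ)‖ ^ 2 := by
  rw [QPWPT_eq_fourier, norm_mul, norm_mul, Complex.norm_exp_I_mul_ofReal, one_mul, mul_pow,
    norm_qpConst_sq hb]

theorem sq_mul_norm_QPWPT_sq (hb : 0 < b) (a c d e : ℝ) (ψ f : ℝ → ℂ) (ξ β α : ℝ) :
    ξ ^ 2 * ‖QPWPT a b c d e ψ f ξ β α‖ ^ 2 = (b / (2 * Real.pi))⁻¹ *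
      ((-(b / (2 * Real.pi)) * ξ) ^ 2 *
        ‖𝓕 (qpWindowed a d (dil ψ α) f β) (-(b / (2 * Real.pi)) * ξ)‖ ^ 2) := by
  rw [norm_QPWPT_sq hb.le]
  field_simp

theorem integrable_sq_mul_norm_QPWPT_sq_iff (hb : 0 < b) :
    Integrable (fun ξ : ℝ ↦ ξ ^ 2 * ‖QPWPT a b c d e ψ f ξ β α‖ ^ 2) ↔
      Integrable fun w : ℝ ↦ w ^ 2 * ‖𝓕 (qpWindowed a d (dil ψ α) f β) w‖ ^ 2 := by
  have hk : b / (2 * Real.pi) ≠ 0 := by positivity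
  simp only [sq_mul_norm_QPWPT_sq hb]
  rw [integrable_const_mul_iff (inv_ne_zero hk).isUnit]
  exact integrable_comp_mul_left_iff
    (fun w ↦ w ^ 2 * ‖𝓕 (qpWindowed a d (dil ψ α) f β) w‖ ^ 2) (neg_ne_zero.2 hk)

theorem integral_sq_mul_norm_QPWPT_sq (hb : 0 < b) :
    ∫ ξ : ℝ, ξ ^ 2 * ‖QPWPT a b c d e ψ f ξ β α‖ ^ 2 = (2 * Real.pi / b) ^ 2 *
      ∫ w : ℝ, w ^ 2 * ‖𝓕 (qpWindowed a d (dil ψ α) f β) w‖ ^ 2 := by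
  have hk : 0 < b / (2 * Real.pi) := by positivity
  simp only [sq_mul_norm_QPWPT_sq hb, integral_const_mul]
  rw [Measure.integral_comp_mul_left
      (fun w ↦ w ^ 2 * ‖𝓕 (qpWindowed a d (dil ψ α) f β) w‖ ^ 2),
    smul_eq_mul, abs_inv, abs_neg, abs_of_pos hk, ← mul_assoc]
  field_simp

theorem qpwpt_heisenberg_of_fixed_position (hb : 0 < b) (hf : MemLp f 2)
    (hφ : MemLp (dil ψ α) 2)
    (hN : Integrable fun t ↦ ‖f t‖ ^ 2 * ‖dil ψ α (t - β)‖ ^ 2)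
    (hA : Integrable fun t ↦ t ^ 2 * ‖f t‖ ^ 2 * ‖dil ψ α (t - β)‖ ^ 2)
    (hB : Integrable fun ξ : ℝ ↦ ξ ^ 2 * ‖QPWPT a b c d e ψ f ξ β α‖ ^ 2) :
    (∫ t, ‖f t‖ ^ 2 * ‖dil ψ α (t - β)‖ ^ 2) ^ 2 ≤
      (∫ t, t ^ 2 * ‖f t‖ ^ 2 * ‖dil ψ α (t - β)‖ ^ 2) *
        (4 * b ^ 2 * ∫ ξ : ℝ, ξ ^ 2 * ‖QPWPT a b c d e ψ f ξ β α‖ ^ 2) := by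
  have uncertainty := heisenberg_uncertainty (u := (1 : ℝ)) (v := (1 : ℝ))
    (integrable_qpWindowed a d hφ hf β) (memLp_two_qpWindowed hφ hf hN)
    (by simpa [norm_qpWindowed_sq, mul_assoc] using hA)
    (by simpa using (integrable_sq_mul_norm_QPWPT_sq_iff hb).1 hB)
  simp only [RCLike.inner_apply, map_one, mul_one, one_mul, norm_qpWindowed_sq, ← mul_assoc]
    at uncertainty
  rw [integral_sq_mul_norm_QPWPT_sq hb]
  refine uncertainty.trans_eq ?_
  field_simp
  ring

theorem qpwpt_heisenberg_mul_integral_norm_sq (hb : 0 < b) (hf : MemLp f 2) (hψ : MemLp ψ 2)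
    (hα : 0 < α) (hft : Integrable fun t : ℝ ↦ t ^ 2 * ‖f t‖ ^ 2)
    (hWξ : Integrable fun q : ℝ × ℝ ↦ q.1 ^ 2 * ‖QPWPT a b c d e ψ f q.1 q.2 α‖ ^ 2) :
    ((∫ t, ‖f t‖ ^ 2) * ∫ t, ‖ψ t‖ ^ 2) ^ 2 ≤
      ((∫ t : ℝ, t ^ 2 * ‖f t‖ ^ 2) * ∫ t, ‖ψ t‖ ^ 2) *
        (4 * b ^ 2 * ∫ β : ℝ, ∫ ξ : ℝ, ξ ^ 2 * ‖QPWPT a b c d e ψ f ξ β α‖ ^ 2) := by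
  have hφ : MemLp (dil ψ α) 2 := memLp_dil hψ hα.ne'
  have hF : Integrable fun t ↦ ‖f t‖ ^ 2 := hf.integrable_norm_pow two_ne_zero
  have hP : Integrable fun t ↦ ‖dil ψ α t‖ ^ 2 := hφ.integrable_norm_pow two_ne_zero
  have hN := integrable_mul_comp_sub hF hP
  have hA := integrable_mul_comp_sub hft hP
  have fixed_position : ∀ᵐ β : ℝ, (∫ t, ‖f t‖ ^ 2 * ‖dil ψ α (t - β)‖ ^ 2) ^ 2 ≤
      (∫ t, t ^ 2 * ‖f t‖ ^ 2 * ‖dil ψ α (t - β)‖ ^ 2) *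
        (4 * b ^ 2 * ∫ ξ : ℝ, ξ ^ 2 * ‖QPWPT a b c d e ψ f ξ β α‖ ^ 2) := by
    filter_upwards [hN.prod_right_ae, hA.prod_right_ae, hWξ.prod_left_ae] with β hNβ hAβ hBβ
    exact qpwpt_heisenberg_of_fixed_position hb hf hφ hNβ hAβ hBβ
  have integrated := sq_integral_le_of_sq_le_mul hA.integral_prod_left
    (hWξ.integral_prod_right.const_mul (4 * b ^ 2))
    (.of_forall fun β ↦ integral_nonneg fun t ↦ by positivity)
    (.of_forall fun β ↦ mul_nonneg (by positivity) (integral_nonneg fun ξ ↦ by positivity))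
    fixed_position
  rwa [integral_integral_mul_comp_sub hF hP, integral_integral_mul_comp_sub hft hP,
    integral_const_mul, integral_norm_dil_sq ψ hα] at integrated

end WavePacketTransform

theorem qpwpt_heisenberg_general (a b c d e : ℝ) (hb : 0 < b) (f ψ : ℝ → ℂ)
    (hf : MemLp f 2 volume) (hψ : MemLp ψ 2 volume) (α : ℝ) (hα : 0 < α)
    (hft : Integrable (fun t : ℝ => t ^ 2 * ‖f t‖ ^ 2) volume)
    (hWξ : Integrable (fun q : ℝ × ℝ => q.1 ^ 2 * ‖QPWPT a b c d e ψ f q.1 q.2 α‖ ^ 2) volume) :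
    (∫ t : ℝ, t ^ 2 * ‖f t‖ ^ 2) *
        (∫ β : ℝ, ∫ ξ : ℝ, ξ ^ 2 * ‖QPWPT a b c d e ψ f ξ β α‖ ^ 2)
      ≥ ((1 / (2 * b)) * (∫ t : ℝ, ‖f t‖ ^ 2) *
          (∫ t : ℝ, ‖ψ t‖ ^ 2) ^ ((1 : ℝ) / 2)) ^ 2 := by
  have hψ₀ : 0 ≤ ∫ t, ‖ψ t‖ ^ 2 := integral_nonneg fun t ↦ by positivity
  rw [← Real.sqrt_eq_rpow, ge_iff_le, mul_pow, mul_pow, Real.sq_sqrt hψ₀]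
  rcases hψ₀.eq_or_lt with hψ_zero | hψ_pos
  · rw [← hψ_zero, mul_zero]
    exact mul_nonneg (integral_nonneg fun t ↦ by positivity)
      (integral_nonneg fun β ↦ integral_nonneg fun ξ ↦ by positivity)
  · refine le_of_mul_le_mul_right ?_ (by positivity : 0 < 4 * b ^ 2 * ∫ t, ‖ψ t‖ ^ 2)
    calc (1 / (2 * b)) ^ 2 * (∫ t, ‖f t‖ ^ 2) ^ 2 * (∫ t, ‖ψ t‖ ^ 2) *
          (4 * b ^ 2 * ∫ t, ‖ψ t‖ ^ 2)
        = ((∫ t, ‖f t‖ ^ 2) * ∫ t, ‖ψ t‖ ^ 2) ^ 2 := by field_simp; ring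
      _ ≤ _ := qpwpt_heisenberg_mul_integral_norm_sq hb hf hψ hα hft hWξ
      _ = _ := by ring

theorem qpwpt_heisenberg (a b c d e : ℝ) (hb : 0 < b) (f ψ : ℝ → ℂ)
    (hf1 : Integrable f volume) (hf2 : MemLp f 2 volume)
    (hψ1 : Integrable ψ volume) (hψ2 : MemLp ψ 2 volume)
    (α : ℝ) (hα : 0 < α)
    (hft : Integrable (fun t : ℝ => t ^ 2 * ‖f t‖ ^ 2) volume)
    (hWξ : Integrable (fun q : ℝ × ℝ => q.1 ^ 2 * ‖QPWPT a b c d e ψ f q.1 q.2 α‖ ^ 2) volume) :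
    (∫ t : ℝ, t ^ 2 * ‖f t‖ ^ 2) *
        (∫ β : ℝ, ∫ ξ : ℝ, ξ ^ 2 * ‖QPWPT a b c d e ψ f ξ β α‖ ^ 2)
      ≥ ((1 / (2 * b)) * (∫ t : ℝ, ‖f t‖ ^ 2) *
          (∫ t : ℝ, ‖ψ t‖ ^ 2) ^ ((1 : ℝ) / 2)) ^ 2 :=
  qpwpt_heisenberg_general a b c d e hb f ψ hf2 hψ2 α hα hft hWξ
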